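/- Let M be a Malcev algebra over F lying in the variety H, containing L = sl2(F), and such that mL ≠ 0 for every nonzero m ∈ M. Then N_M is a subalgebra of M (i.e., the product of any two elements of N_M lies in N_M) and N_M·J_M ⊆ J_M. -/

import Mathlib

section
variable {K : Type*} [Field K] {M : Type*} [AddCommGroup M] [Module K M]

/-- the Jacobian `J(x,y,z) = (xy)z + (yz)x + (zx)y` -/
def mjac (μ : M →ₗ[K] M →ₗ[K] M) (x y z : M) : M :=
  μ (μ x y) z + μ (μ y z) x + μ (μ z x) y

/-- `{x,y,z} = (xy)z − (xz)y + 2·x(yz)` -/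
def mbr (μ : M →ₗ[K] M →ₗ[K] M) (x y z : M) : M :=
  μ (μ x y) z - μ (μ x z) y + (2 : K) • μ x (μ y z)

/-- `h(y,z,t,x,u) = {yz,t,u}x + {yz,t,x}u + {yx,z,u}t + {yu,z,x}t` -/
def mh (μ : M →ₗ[K] M →ₗ[K] M) (y z t x u : M) : M :=
  μ (mbr μ (μ y z) t u) x + μ (mbr μ (μ y z) t x) u +
    μ (mbr μ (μ y x) z u) t + μ (mbr μ (μ y u) z x) t

/-- A Malcev algebra structure: anticommutative (`x·x = 0`) together with the Malcev
identity `(xz)(yt) = ((xy)z)t + ((yz)t)x + ((zt)x)y + ((tx)y)z`. -/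
def IsMalcev (μ : M →ₗ[K] M →ₗ[K] M) : Prop :=
  (∀ x, μ x x = 0) ∧
    ∀ x y z t, μ (μ x z) (μ y t) =
      μ (μ (μ x y) z) t + μ (μ (μ y z) t) x + μ (μ (μ z t) x) y + μ (μ (μ t x) y) z

/-- the variety 𝓗 : `h(y,z,t,x,u) = 0` identically -/
def InVarietyH (μ : M →ₗ[K] M →ₗ[K] M) : Prop := ∀ y z t x u, mh μ y z t x u = 0

/-- `N_M = {m | J(m,a,b) = 0 ∀ a,b ∈ L}` -/
def NMset (μ : M →ₗ[K] M →ₗ[K] M) (L : Submodule K M) : Set M :=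
  {m : M | ∀ a ∈ L, ∀ b ∈ L, mjac μ m a b = 0}

/-- `J_M = {m | {m,a,b} = 0 ∀ a,b ∈ L}` -/
def JMset (μ : M →ₗ[K] M →ₗ[K] M) (L : Submodule K M) : Set M :=
  {m : M | ∀ a ∈ L, ∀ b ∈ L, mbr μ m a b = 0}

section MalcevIdentities
variable {μ : M →ₗ[K] M →ₗ[K] M}

theorem IsMalcev.anticomm (hMal : IsMalcev μ) (u v : M) : μ u v = -μ v u := by
  have h := hMal.1 (u + v)
  simp only [map_add, LinearMap.add_apply, hMal.1, zero_add, add_zero] at h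
  exact eq_neg_of_add_eq_zero_right h

/-- The Malcev identity on `m, a, b, c`, with `m` moved to the left of every product. -/
theorem IsMalcev.mul_mul_left (hMal : IsMalcev μ) (m a b c : M) :
    μ (μ m b) (μ a c) = μ (μ (μ m a) b) c - μ m (μ (μ a b) c) - μ (μ m (μ b c)) a -
      μ (μ (μ m c) a) b := by
  have h := hMal.2 m a b c
  rw [hMal.anticomm _ m, hMal.anticomm _ m, hMal.anticomm c m] at h
  simp only [map_neg, LinearMap.neg_apply] at h
  rw [h]; abel

/-- The Malcev identity expanding `(xy)(ab)`, with `x` on the left and `a, b` on the right. -/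
theorem IsMalcev.mul_apply_mul (hMal : IsMalcev μ) (x y a b : M) :
    μ (μ x y) (μ a b) = μ (μ (μ x a) y) b + μ x (μ (μ y a) b) - μ (μ x (μ y b)) a -
      μ (μ (μ x b) a) y := by
  have h := hMal.2 x a y b
  rw [hMal.anticomm _ x, hMal.anticomm _ x, hMal.anticomm b x, hMal.anticomm a y] at h
  simp only [map_neg, LinearMap.neg_apply] at h
  rw [h]; abel

theorem IsMalcev.mul_mul_right (hMal : IsMalcev μ) (x y a b : M) :
    μ (μ x a) (μ y b) = μ (μ (μ x y) a) b - μ x (μ (μ y a) b) - μ (μ x (μ a b)) y -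
      μ (μ (μ x b) y) a := by
  have h := hMal.2 x y a b
  rw [hMal.anticomm _ x, hMal.anticomm _ x, hMal.anticomm b x] at h
  simp only [map_neg, LinearMap.neg_apply] at h
  rw [h]; abel

/-- How the commutator of two right multiplications acts on a product. -/
theorem IsMalcev.commutator_apply_mul (hMal : IsMalcev μ) (x y a b : M) :
    μ (μ (μ x y) a) b - μ (μ (μ x y) b) a + μ (μ x y) (μ a b) =
      μ (μ (μ x a) b - μ (μ x b) a + μ x (μ a b)) y +
      μ x (μ (μ y a) b - μ (μ y b) a + μ y (μ a b)) := by
  have h₁ := hMal.mul_mul_right x y b a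
  have h₂ := hMal.mul_mul_left x a b y
  have h₃ := hMal.mul_apply_mul x y a b
  rw [hMal.anticomm a y, hMal.anticomm b y, hMal.anticomm (μ a b) y] at h₂
  rw [hMal.anticomm b a] at h₁
  simp only [map_neg, LinearMap.neg_apply, map_add, map_sub, LinearMap.add_apply,
    LinearMap.sub_apply] at *
  linear_combination (norm := module) h₂ + h₁ + h₃

end MalcevIdentities

/-- `E, H, F` multiply as the standard basis of `sl₂`. -/
structure IsSlTwo (μ : M →ₗ[K] M →ₗ[K] M) (E H F : M) : Prop where
  EH : μ E H = E
  FH : μ F H = -F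
  EF : μ E F = (2⁻¹ : K) • H

section SlTwo
variable {μ : M →ₗ[K] M →ₗ[K] M} {E H F : M}

theorem IsSlTwo.HE (hs : IsSlTwo μ E H F) (hMal : IsMalcev μ) : μ H E = -E := by
  rw [hMal.anticomm, hs.EH]

theorem IsSlTwo.HF (hs : IsSlTwo μ E H F) (hMal : IsMalcev μ) : μ H F = F := by
  rw [hMal.anticomm, hs.FH, neg_neg]

theorem IsSlTwo.FE (hs : IsSlTwo μ E H F) (hMal : IsMalcev μ) :
    μ F E = -((2⁻¹ : K) • H) := by
  rw [hMal.anticomm, hs.EF]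

/-- Products of three right multiplications by `E, H, F`, reordered so that the `E` act first, then
the `H`, then the `F`, except that `EFH` is kept. -/
theorem IsSlTwo.cubic (h2 : (2 : K) ≠ 0) (hMal : IsMalcev μ) (hs : IsSlTwo μ E H F) (m : M) :
    (μ (μ (μ m E) H) E = μ (μ (μ m E) E) H - μ (μ m E) E) ∧
    (μ (μ (μ m E) F) E = μ (μ (μ m E) E) F - (2⁻¹ : K) • μ (μ m H) E - (2⁻¹ : K) • μ m E) ∧
    (μ (μ (μ m H) E) E = μ (μ (μ m E) E) H - (2 : K) • μ (μ m E) E) ∧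
    (μ (μ (μ m H) E) H = μ (μ (μ m E) H) H - μ (μ m H) E - μ m E) ∧
    (μ (μ (μ m H) E) F = μ (μ (μ m E) F) H) ∧
    (μ (μ (μ m H) H) E = μ (μ (μ m E) H) H - μ (μ m H) E - μ (μ m E) H) ∧
    (μ (μ (μ m H) F) E =
      μ (μ (μ m E) H) F - μ (μ m F) E - (2⁻¹ : K) • μ (μ m H) H - (2⁻¹ : K) • μ m H) ∧
    (μ (μ (μ m H) F) H = μ (μ (μ m H) H) F - μ (μ m F) H - μ m F) ∧
    (μ (μ (μ m F) E) E = μ (μ (μ m E) E) F - (2⁻¹ : K) • μ (μ m H) E - (2⁻¹ : K) • μ (μ m E) H) ∧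
    (μ (μ (μ m F) E) H =
      μ (μ (μ m E) H) F - μ (μ m F) E - (2⁻¹ : K) • μ (μ m H) H - (2⁻¹ : K) • μ m H) ∧
    (μ (μ (μ m F) E) F = μ (μ (μ m E) F) F - (2⁻¹ : K) • μ (μ m F) H - (2⁻¹ : K) • μ m F) ∧
    (μ (μ (μ m F) H) E =
      μ (μ (μ m E) F) H - (2⁻¹ : K) • μ (μ m H) H - μ (μ m E) F + (2⁻¹ : K) • μ m H) ∧
    (μ (μ (μ m F) H) H = μ (μ (μ m H) H) F - μ (μ m F) H - μ (μ m H) F) ∧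
    (μ (μ (μ m F) H) F = μ (μ (μ m H) F) F - μ (μ m F) F) ∧
    (μ (μ (μ m F) F) E = μ (μ (μ m E) F) F - (2⁻¹ : K) • μ (μ m F) H - (2⁻¹ : K) • μ (μ m H) F) ∧
    (μ (μ (μ m F) F) H = μ (μ (μ m H) F) F - (2 : K) • μ (μ m F) F) := by
  have hEHE := hMal.mul_mul_left m E H E
  have hEFE := hMal.mul_mul_left m E F E
  have hEEH := hMal.mul_mul_left m E E H
  have hEHH := hMal.mul_mul_left m E H H
  have hEFH := hMal.mul_mul_left m E F H
  have hHHE := hMal.mul_mul_left m H H E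
  have hHFE := hMal.mul_mul_left m H F E
  have hHFH := hMal.mul_mul_left m H F H
  have hEEF := hMal.mul_mul_left m E E F
  have hEHF := hMal.mul_mul_left m E H F
  have hEFF := hMal.mul_mul_left m E F F
  have hFHE := hMal.mul_mul_left m F H E
  have hHHF := hMal.mul_mul_left m H H F
  have hHFF := hMal.mul_mul_left m H F F
  have hFFE := hMal.mul_mul_left m F F E
  have hFFH := hMal.mul_mul_left m F F H
  simp only [hs.EH, hs.FH, hs.EF, hs.HE hMal, hs.HF hMal, hs.FE hMal, hMal.1, map_neg, map_smul,
    map_zero, LinearMap.neg_apply, LinearMap.smul_apply, LinearMap.zero_apply]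
    at hEHE hEFE hEEH hEHH hEFH hHHE hHFE hHFH hEEF hEHF hEFF hFHE hHHF hHFF hFFE hFFH
  refine ⟨?_, ?_, ?_, ?_, ?_, ?_, ?_, ?_, ?_, ?_, ?_, ?_, ?_, ?_, ?_, ?_⟩
  · linear_combination (norm := (match_scalars <;> (try field_simp) <;> ring1)) -hEHE
  · linear_combination (norm := (match_scalars <;> (try field_simp) <;> ring1)) -hEFE
  · linear_combination (norm := (match_scalars <;> (try field_simp) <;> ring1)) hEEH
  · linear_combination (norm := (match_scalars <;> (try field_simp) <;> ring1)) hEHH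
  · linear_combination (norm := (match_scalars <;> (try field_simp) <;> ring1)) hEFH
  · linear_combination (norm := (match_scalars <;> (try field_simp) <;> ring1)) -hHHE
  · linear_combination (norm := (match_scalars <;> (try field_simp) <;> ring1)) -hHFE
  · linear_combination (norm := (match_scalars <;> (try field_simp) <;> ring1)) -hHFH
  · linear_combination (norm := (match_scalars <;> (try field_simp) <;> ring1)) hEEF
  · linear_combination (norm := (match_scalars <;> (try field_simp) <;> ring1)) hEHF
  · linear_combination (norm := (match_scalars <;> (try field_simp) <;> ring1)) hEFF
  · linear_combination (norm := (match_scalars <;> (try field_simp) <;> ring1)) -hFHE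
  · linear_combination (norm := (match_scalars <;> (try field_simp) <;> ring1)) hHHF
  · linear_combination (norm := (match_scalars <;> (try field_simp) <;> ring1)) hHFF
  · linear_combination (norm := (match_scalars <;> (try field_simp) <;> ring1)) -hFFE
  · linear_combination (norm := (match_scalars <;> (try field_simp) <;> ring1)) -hFFH

theorem IsSlTwo.quartic (h2 : (2 : K) ≠ 0) (hMal : IsMalcev μ) (hs : IsSlTwo μ E H F) (m : M) :
    μ (μ (μ (μ m E) E) F) H = μ (μ (μ (μ m E) E) H) F - μ (μ (μ m E) E) F := by
  have hc := hs.cubic h2 hMal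
  have h : μ (μ (μ (μ m E) H) E) F = μ (μ (μ (μ m E) E) F) H := by
    obtain ⟨-, -, -, -, h, -⟩ := hc (μ m E)
    exact h
  rw [← h, (hc m).1, map_sub, LinearMap.sub_apply]

variable (μ E H F) in
/-- The map `m ↦ J(m,E,F)H`, which vanishes on `N_M` and is `-3/2` on `J_M`. -/
def jacProj : M →ₗ[K] M :=
  μ.flip H ∘ₗ (μ.flip F ∘ₗ μ.flip E - μ.flip E ∘ₗ μ.flip F - (2⁻¹ : K) • μ.flip H)

theorem IsSlTwo.jacProj_eq (hMal : IsMalcev μ) (hs : IsSlTwo μ E H F) (m : M) :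
    jacProj μ E H F m = μ (mjac μ m E F) H := by
  simp only [jacProj, mjac, hs.EF, hMal.anticomm F m, hMal.anticomm _ m, map_smul, map_neg,
    LinearMap.comp_apply, LinearMap.sub_apply, LinearMap.smul_apply, LinearMap.flip_apply,
    LinearMap.neg_apply]
  congr 2; module

theorem IsSlTwo.jacProj_apply (h2 : (2 : K) ≠ 0) (hMal : IsMalcev μ) (hs : IsSlTwo μ E H F)
    (m : M) : jacProj μ E H F m =
      μ (μ (μ m E) F) H - μ (μ (μ m E) H) F + μ (μ m F) E + (2⁻¹ : K) • μ m H := by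
  simp only [jacProj, hs.cubic h2 hMal, map_smul, map_sub,
    LinearMap.comp_apply, LinearMap.sub_apply, LinearMap.smul_apply, LinearMap.flip_apply]
  module

/-- A bilinear map alternating on `span {E, H, F}` vanishes there as soon as it does on pairs of
generators. -/
theorem alternating_eq_zero_of_mem_span {B : M →ₗ[K] M →ₗ[K] M} (hB : ∀ a, B a a = 0)
    (hEH : B E H = 0) (hEF : B E F = 0) (hHF : B H F = 0) {a b : M}
    (ha : a ∈ Submodule.span K {E, H, F}) (hb : b ∈ Submodule.span K {E, H, F}) :
    B a b = 0 := by
  have hsymm : ∀ {u v}, B u v = 0 → B v u = 0 := fun {u v} h => by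
    simpa [hB, h] using hB (u + v)
  obtain ⟨a₁, a₂, a₃, rfl⟩ := Submodule.mem_span_triple.1 ha
  obtain ⟨b₁, b₂, b₃, rfl⟩ := Submodule.mem_span_triple.1 hb
  simp [hB, hEH, hEF, hHF, hsymm hEH, hsymm hEF, hsymm hHF]

theorem IsMalcev.mjac_eq_zero_of_mem_span (hMal : IsMalcev μ) {m : M}
    (hEH : mjac μ m E H = 0) (hEF : mjac μ m E F = 0) (hHF : mjac μ m H F = 0) {a b : M}
    (ha : a ∈ Submodule.span K {E, H, F}) (hb : b ∈ Submodule.span K {E, H, F}) :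
    mjac μ m a b = 0 := by
  let B : M →ₗ[K] M →ₗ[K] M := LinearMap.mk₂ K (mjac μ m)
    (fun _ _ _ => by simp only [mjac, map_add, LinearMap.add_apply]; abel)
    (fun _ _ _ => by simp [mjac])
    (fun _ _ _ => by simp only [mjac, map_add, LinearMap.add_apply]; abel)
    (fun _ _ _ => by simp [mjac])
  refine alternating_eq_zero_of_mem_span (B := B) (fun a => ?_) hEH hEF hHF ha hb
  simp [B, mjac, hMal.1, hMal.anticomm a m]

theorem IsMalcev.mbr_eq_zero_of_mem_span (hMal : IsMalcev μ) {m : M}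
    (hEH : mbr μ m E H = 0) (hEF : mbr μ m E F = 0) (hHF : mbr μ m H F = 0) {a b : M}
    (ha : a ∈ Submodule.span K {E, H, F}) (hb : b ∈ Submodule.span K {E, H, F}) :
    mbr μ m a b = 0 := by
  let B : M →ₗ[K] M →ₗ[K] M := LinearMap.mk₂ K (mbr μ m)
    (fun _ _ _ => by simp only [mbr, map_add, LinearMap.add_apply]; module)
    (fun _ _ _ => by simp only [mbr, map_smul, LinearMap.smul_apply]; module)
    (fun _ _ _ => by simp only [mbr, map_add, LinearMap.add_apply]; module)
    (fun _ _ _ => by simp only [mbr, map_smul, LinearMap.smul_apply]; module)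
  refine alternating_eq_zero_of_mem_span (B := B) (fun a => ?_) hEH hEF hHF ha hb
  simp [B, mbr, hMal.1]

theorem IsSlTwo.jacProj_mul (h2 : (2 : K) ≠ 0) (hMal : IsMalcev μ) (hs : IsSlTwo μ E H F)
    (m : M) {a : M} (ha : a ∈ Submodule.span K {E, H, F}) :
    jacProj μ E H F (μ m a) = μ (jacProj μ E H F m) a := by
  obtain ⟨α, β, γ, rfl⟩ := Submodule.mem_span_triple.1 ha
  simp only [hs.jacProj_apply h2 hMal, hs.cubic h2 hMal, hs.quartic h2 hMal, map_add, map_sub,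
    map_smul, LinearMap.add_apply, LinearMap.sub_apply, LinearMap.smul_apply]
  match_scalars <;> (try field_simp) <;> ring1

/-- `{·, a, b}` vanishes on the range of `jacProj`. -/
theorem IsSlTwo.mbr_jacProj (h2 : (2 : K) ≠ 0) (hMal : IsMalcev μ) (hs : IsSlTwo μ E H F)
    (m : M) {a b : M} (ha : a ∈ Submodule.span K {E, H, F})
    (hb : b ∈ Submodule.span K {E, H, F}) : mbr μ (jacProj μ E H F m) a b = 0 := by
  refine hMal.mbr_eq_zero_of_mem_span ?_ ?_ ?_ ha hb <;>
  · simp only [mbr, hs.jacProj_apply h2 hMal, hs.EH, hs.EF, hs.HF hMal, hs.cubic h2 hMal,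
      hs.quartic h2 hMal, map_add, map_sub, map_smul, LinearMap.add_apply, LinearMap.sub_apply,
      LinearMap.smul_apply]
    match_scalars <;> (try field_simp) <;> ring1

/-- `J(·, a, b)` vanishes on the range of `jacProj + 3/2`. -/
theorem IsSlTwo.mjac_jacProj_add (h2 : (2 : K) ≠ 0) (hMal : IsMalcev μ) (hs : IsSlTwo μ E H F)
    (m : M) {a b : M} (ha : a ∈ Submodule.span K {E, H, F})
    (hb : b ∈ Submodule.span K {E, H, F}) :
    mjac μ (jacProj μ E H F m + (3 / 2 : K) • m) a b = 0 := by
  refine hMal.mjac_eq_zero_of_mem_span ?_ ?_ ?_ ha hb <;>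
  · simp only [mjac, hMal.anticomm H (_ + _), hMal.anticomm F (_ + _), hMal.anticomm _ (_ + _),
      hs.EH, hs.EF, hs.HF hMal]
    simp only [hs.jacProj_apply h2 hMal, hs.cubic h2 hMal,
      hs.quartic h2 hMal, map_add, map_sub, map_smul, map_neg, LinearMap.add_apply,
      LinearMap.sub_apply, LinearMap.smul_apply, LinearMap.neg_apply]
    match_scalars <;> (try field_simp) <;> ring1

theorem IsSlTwo.jacProj_H_H (h2 : (2 : K) ≠ 0) (hMal : IsMalcev μ) (hs : IsSlTwo μ E H F)
    (m : M) : μ (μ (jacProj μ E H F m) H) H = jacProj μ E H F m := by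
  simp only [hs.jacProj_apply h2 hMal, hs.cubic h2 hMal, map_add, map_sub,
    map_smul, LinearMap.add_apply, LinearMap.sub_apply, LinearMap.smul_apply]
  match_scalars <;> (try field_simp) <;> ring1

theorem IsMalcev.mjac_eq (hMal : IsMalcev μ) (m a b : M) :
    mjac μ m a b = μ (μ m a) b - μ (μ m b) a - μ m (μ a b) := by
  simp only [mjac, hMal.anticomm b m, hMal.anticomm _ m, map_neg, LinearMap.neg_apply]
  abel

theorem IsSlTwo.mjac_of_jacProj_eq_zero (h2 : (2 : K) ≠ 0) (h3 : (3 : K) ≠ 0)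
    (hMal : IsMalcev μ) (hs : IsSlTwo μ E H F) {m : M} (hm : jacProj μ E H F m = 0) {a b : M}
    (ha : a ∈ Submodule.span K {E, H, F}) (hb : b ∈ Submodule.span K {E, H, F}) :
    μ (μ m a) b - μ (μ m b) a = μ m (μ a b) := by
  have h := hs.mjac_jacProj_add h2 hMal m ha hb
  rw [hm, zero_add, hMal.mjac_eq] at h
  simp only [map_smul, LinearMap.smul_apply, ← smul_sub] at h
  exact sub_eq_zero.1 ((smul_eq_zero.1 h).resolve_left (div_ne_zero h3 h2))

theorem IsSlTwo.two_smul_EF (h2 : (2 : K) ≠ 0) (hs : IsSlTwo μ E H F) :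
    μ ((2 : K) • E) F = H := by
  rw [map_smul, LinearMap.smul_apply, hs.EF, smul_inv_smul₀ h2]

theorem IsSlTwo.jacProj_mul_eq_zero (h2 : (2 : K) ≠ 0) (h3 : (3 : K) ≠ 0)
    (hMal : IsMalcev μ) (hs : IsSlTwo μ E H F) {x y : M} (hx : jacProj μ E H F x = 0)
    (hy : jacProj μ E H F y = 0) : jacProj μ E H F (μ x y) = 0 := by
  have hE : E ∈ Submodule.span K {E, H, F} := Submodule.subset_span (by simp)
  have hH : H ∈ Submodule.span K {E, H, F} := Submodule.subset_span (by simp)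
  have hF : F ∈ Submodule.span K {E, H, F} := Submodule.subset_span (by simp)
  have hmul := hs.jacProj_mul h2 hMal
  have hlie := fun {m} => hs.mjac_of_jacProj_eq_zero h2 h3 hMal (m := m)
  have hbr := hs.mbr_jacProj h2 hMal
  have hHH := hs.jacProj_H_H h2 hMal
  have hinv : ∀ {m a}, jacProj μ E H F m = 0 → a ∈ Submodule.span K {E, H, F} →
      jacProj μ E H F (μ m a) = 0 := fun hm ha => by
    rw [hmul _ ha, hm, map_zero, LinearMap.zero_apply]
  set p := jacProj μ E H F
  have equivariant : ∀ {x y a b c}, p x = 0 → p y = 0 → a ∈ Submodule.span K {E, H, F} →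
      b ∈ Submodule.span K {E, H, F} → c ∈ Submodule.span K {E, H, F} → μ a b = c →
      μ (p (μ x y)) c = (-2 : K) • (p (μ (μ x c) y) + p (μ x (μ y c))) := by
    intro x y a b c hx hy ha hb hc hab
    have h := congrArg p (hMal.commutator_apply_mul x y a b)
    have h' := hbr (μ x y) ha hb
    rw [mbr] at h'
    simp only [hlie hx ha hb, hlie hy ha hb, hab, map_add, map_sub, LinearMap.add_apply,
      hmul _ ha, hmul _ hb, hmul _ hc] at h h'
    linear_combination (norm := module) h' - h
  have hpE := fun {x y} (hx : p x = 0) (hy : p y = 0) => equivariant hx hy hE hH hE hs.EH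
  have hpF := fun {x y} (hx : p x = 0) (hy : p y = 0) =>
    equivariant hx hy hH hF hF (hs.HF hMal)
  have hpH := fun {x y} (hx : p x = 0) (hy : p y = 0) =>
    equivariant hx hy (Submodule.smul_mem _ 2 hE) hF hH (hs.two_smul_EF h2)
  have balanced : ∀ {x y}, p x = 0 → p y = 0 → p (μ (μ x H) y) = p (μ x (μ y H)) := by
    intro x y hx hy
    have h := congrArg p (hMal.mul_apply_mul x y H H)
    simp only [hMal.1, map_zero, map_add, map_sub, hmul _ hH, hpH (hinv hx hH) hy,
      hpH hx (hinv hy hH)] at h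
    have h0 : (3 : K) • (p (μ x (μ (μ y H) H)) - p (μ (μ (μ x H) H) y)) = 0 := by
      linear_combination (norm := module) -h
    have h1 := (smul_eq_zero.1 h0).resolve_left h3
    have h4 : μ (p (μ (μ x H) y)) H = μ (p (μ x (μ y H))) H := by
      rw [hpH (hinv hx hH) hy, hpH hx (hinv hy hH)]
      linear_combination (norm := module) (2 : K) • h1
    rw [← hHH, h4, hHH]
  have four : ∀ {x y}, p x = 0 → p y = 0 → (4 : K) • p (μ x (μ y H)) = -μ (p (μ x y)) H := by
    intro x y hx hy
    rw [hpH hx hy, balanced hx hy]; module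
  have four_E : ∀ {x y}, p x = 0 → p y = 0 → (4 : K) • p (μ x (μ y E)) = -μ (p (μ x y)) E := by
    intro x y hx hy
    have hxE := hinv hx hE
    have hxH := hinv hx hH
    have hyE := hinv hy hE
    have hGE := hbr (μ x y) hE hH
    rw [mbr, hs.EH] at hGE
    have hxEH := congrArg (fun z => p (μ z y)) (hlie hx hE hH)
    simp only [hs.EH, map_sub, LinearMap.sub_apply] at hxEH
    have b₁ := balanced hxE hy
    have b₂ := congrArg (μ · E) (balanced hx hy)
    have b₃ := balanced hx hyE
    have f₁ := four hxE hy
    have f₂ := congrArg (μ · E) (four hx hy)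
    have f₃ := four hx hyE
    have e₁ := congrArg (μ · H) (hpE hx hy)
    have e₂ := hpE hxH hy
    have e₃ := hpE hx hy
    simp only [map_smul, map_add, map_neg, LinearMap.smul_apply, LinearMap.add_apply,
      LinearMap.neg_apply] at f₂ e₁
    have h : (2 : K) • ((4 : K) • p (μ x (μ y E)) + μ (p (μ x y)) E) = 0 := by
      linear_combination (norm := module) (4 : K) • e₃ + (8 : K) • hxEH - (8 : K) • b₁ -
        (2 : K) • f₁ + e₁ + (4 : K) • e₂ - (8 : K) • b₃ - (2 : K) • f₃ - (4 : K) • b₂ - f₂ - hGE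
    exact eq_neg_of_add_eq_zero_left ((smul_eq_zero.1 h).resolve_left h2)
  have apply_E : ∀ {x y}, p x = 0 → p y = 0 → μ (p (μ x y)) E = 0 := by
    intro x y hx hy
    have hGE := hbr (μ x y) hE hH
    rw [mbr, hs.EH] at hGE
    have hyEH := congrArg (fun z => p (μ x z)) (hlie hy hE hH)
    simp only [hs.EH, map_sub] at hyEH
    have e₁ := four_E hx hy
    have e₂ := congrArg (μ · H) e₁
    have e₃ := four_E hx (hinv hy hH)
    have f₁ := congrArg (μ · E) (four hx hy)
    have f₂ := four hx (hinv hy hE)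
    simp only [map_smul, map_neg, LinearMap.smul_apply, LinearMap.neg_apply] at e₂ f₁
    have h : (2 : K) • μ (p (μ x y)) E = 0 := by
      linear_combination (norm := module) (4 : K) • e₁ + (16 : K) • hyEH - (4 : K) • f₂ + e₂ +
        (4 : K) • e₃ - f₁ - hGE
    exact (smul_eq_zero.1 h).resolve_left h2
  have apply_H : μ (p (μ x y)) H = 0 := by
    have hbrEF := hbr (μ x y) hE hF
    rw [mbr, hs.EF, hpF hx hy, apply_E hx hy] at hbrEF
    simpa [apply_E (hinv hx hF) hy, apply_E hx (hinv hy hF), h2] using hbrEF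
  rw [← hHH, apply_H, map_zero, LinearMap.zero_apply]

theorem IsSlTwo.jacProj_mul_add_eq_zero (h2 : (2 : K) ≠ 0) (h3 : (3 : K) ≠ 0)
    (hMal : IsMalcev μ) (hs : IsSlTwo μ E H F) {x y : M} (hx : jacProj μ E H F x = 0)
    (hy : jacProj μ E H F y + (3 / 2 : K) • y = 0) :
    jacProj μ E H F (μ x y) + (3 / 2 : K) • μ x y = 0 := by
  have hE : E ∈ Submodule.span K {E, H, F} := Submodule.subset_span (by simp)
  have hH : H ∈ Submodule.span K {E, H, F} := Submodule.subset_span (by simp)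
  have hF : F ∈ Submodule.span K {E, H, F} := Submodule.subset_span (by simp)
  have hlie := fun {m} => hs.mjac_of_jacProj_eq_zero h2 h3 hMal (m := m)
  have hinvN : ∀ {m a}, jacProj μ E H F m = 0 → a ∈ Submodule.span K {E, H, F} →
      jacProj μ E H F (μ m a) = 0 := fun hm ha => by
    rw [hs.jacProj_mul h2 hMal _ ha, hm, map_zero, LinearMap.zero_apply]
  obtain ⟨q, hq⟩ : ∃ q : M →ₗ[K] M, ∀ m, q m = jacProj μ E H F m + (3 / 2 : K) • m :=
    ⟨jacProj μ E H F + (3 / 2 : K) • LinearMap.id, fun _ => rfl⟩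
  have hmul : ∀ m {a}, a ∈ Submodule.span K {E, H, F} → q (μ m a) = μ (q m) a := by
    intro m a ha
    simp only [hq, hs.jacProj_mul h2 hMal m ha, map_add, map_smul, LinearMap.add_apply,
      LinearMap.smul_apply]
  have hqlie : ∀ m {a b}, a ∈ Submodule.span K {E, H, F} → b ∈ Submodule.span K {E, H, F} →
      μ (μ (q m) a) b - μ (μ (q m) b) a - μ (q m) (μ a b) = 0 := fun m {a b} ha hb => by
    rw [← hMal.mjac_eq, hq, hs.mjac_jacProj_add h2 hMal m ha hb]
  have hinvJ : ∀ {m a}, q m = 0 → a ∈ Submodule.span K {E, H, F} → q (μ m a) = 0 :=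
    fun hm ha => by rw [hmul _ ha, hm, map_zero, LinearMap.zero_apply]
  have heq : ∀ {m}, q m = 0 → m = jacProj μ E H F (-(2 / 3 : K) • m) := fun {m} hm => by
    rw [map_smul, eq_neg_of_add_eq_zero_left ((hq m).symm.trans hm)]
    match_scalars; field_simp
  have hbr : ∀ {m a b}, q m = 0 → a ∈ Submodule.span K {E, H, F} →
      b ∈ Submodule.span K {E, H, F} →
      μ (μ m a) b - μ (μ m b) a = -(2 : K) • μ m (μ a b) := fun {m a b} hm ha hb => by
    have h := hs.mbr_jacProj h2 hMal (-(2 / 3 : K) • m) ha hb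
    rw [← heq hm, mbr] at h
    linear_combination (norm := module) h
  have hHH : ∀ {m}, q m = 0 → μ (μ m H) H = m := fun {m} hm => by
    have h := hs.jacProj_H_H h2 hMal (-(2 / 3 : K) • m)
    rwa [← heq hm] at h
  rw [← hq] at hy ⊢
  have equivariant : ∀ {x y a b c}, jacProj μ E H F x = 0 → q y = 0 →
      a ∈ Submodule.span K {E, H, F} → b ∈ Submodule.span K {E, H, F} →
      c ∈ Submodule.span K {E, H, F} → μ a b = c →
      (2 : K) • μ (q (μ x y)) c = (2 : K) • q (μ (μ x c) y) - q (μ x (μ y c)) := by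
    intro x y a b c hx hy ha hb hc hab
    have h := congrArg q (hMal.commutator_apply_mul x y a b)
    have h' := hqlie (μ x y) ha hb
    simp only [hlie hx ha hb, hbr hy ha hb, hab, map_add, map_sub, map_smul, LinearMap.add_apply,
      hmul _ ha, hmul _ hb, hmul _ hc] at h h'
    linear_combination (norm := module) h - h'
  have hqE := fun {x y} (hx : jacProj μ E H F x = 0) (hy : q y = 0) =>
    equivariant hx hy hE hH hE hs.EH
  have hqF := fun {x y} (hx : jacProj μ E H F x = 0) (hy : q y = 0) =>
    equivariant hx hy hH hF hF (hs.HF hMal)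
  have hqH := fun {x y} (hx : jacProj μ E H F x = 0) (hy : q y = 0) =>
    equivariant hx hy (Submodule.smul_mem _ 2 hE) hF hH (hs.two_smul_EF h2)
  have balanced : ∀ {x y}, jacProj μ E H F x = 0 → q y = 0 →
      q (μ x (μ y H)) = q (μ (μ x H) y) := by
    intro x y hx hy
    have hyH := hinvJ hy hH
    have h := congrArg q (hMal.mul_apply_mul x (μ y H) H H)
    have h₁ := hqH (hinvN hx hH) hyH
    have h₂ := hqH hx (hinvJ hyH hH)
    simp only [hMal.1, map_zero, map_add, map_sub, hmul _ hH, hHH hy] at h h₁ h₂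
    have h0 : (3 : K) • (q (μ x (μ y H)) - q (μ (μ x H) y)) = 0 := by
      linear_combination (norm := module) -(2 : K) • h - h₁ + h₂
    exact sub_eq_zero.1 ((smul_eq_zero.1 h0).resolve_left h3)
  have balanced_E : ∀ {x y}, jacProj μ E H F x = 0 → q y = 0 →
      q (μ x (μ y E)) = q (μ (μ x E) y) := by
    intro x y hx hy
    have hxEH := congrArg (fun z => q (μ z y)) (hlie hx hE hH)
    have hyEH := congrArg (fun z => q (μ x z)) (hbr hy hE hH)
    simp only [hs.EH, map_sub, map_smul, LinearMap.sub_apply] at hxEH hyEH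
    have b₁ := balanced (hinvN hx hE) hy
    have b₂ := balanced hx (hinvJ hy hE)
    have b₃ := congrArg (μ · E) (balanced hx hy)
    have e₁ := hqE hx (hinvJ hy hH)
    have e₂ := hqE (hinvN hx hH) hy
    have h : (2 : K) • (q (μ x (μ y E)) - q (μ (μ x E) y)) = 0 := by
      linear_combination (norm := module)
        hyEH + (2 : K) • hxEH - b₂ + (2 : K) • b₁ - e₂ + e₁ - (2 : K) • b₃
    exact sub_eq_zero.1 ((smul_eq_zero.1 h).resolve_left h2)
  have mul_E : ∀ {x y}, jacProj μ E H F x = 0 → q y = 0 → q (μ x (μ y E)) = 0 := by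
    intro x y hx hy
    have hxEH := congrArg (fun z => q (μ z y)) (hlie hx hE hH)
    have hyEH := congrArg (fun z => q (μ x z)) (hbr hy hE hH)
    simp only [hs.EH, map_sub, map_smul, LinearMap.sub_apply] at hxEH hyEH
    rw [← balanced (hinvN hx hE) hy, ← balanced_E (hinvN hx hH) hy, ← balanced_E hx hy,
      ← balanced_E hx (hinvJ hy hH), ← balanced hx (hinvJ hy hE)] at hxEH
    linear_combination (norm := module) hxEH + hyEH
  have mul_H : ∀ {x y}, jacProj μ E H F x = 0 → q y = 0 → q (μ x (μ y H)) = 0 := by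
    intro x y hx hy
    have hF' := hqF hx (hinvJ hy hE)
    have hyEF := congrArg (fun z => q (μ x z)) (hbr hy hE hF)
    simp only [hs.EF, map_sub, map_smul, mul_E hx hy, mul_E hx (hinvJ hy hF),
      mul_E (hinvN hx hF) hy, map_zero, LinearMap.zero_apply, smul_zero, zero_sub] at hF' hyEF
    rw [neg_eq_zero.1 hF'.symm] at hyEF
    simpa [h2] using hyEF.symm
  rw [← hHH hy]
  exact mul_H hx (hinvJ hy hH)

/-- `N_M` is the kernel of `m ↦ J(m,E,F)H`. -/
theorem IsSlTwo.mem_NMset_iff (h2 : (2 : K) ≠ 0) (h3 : (3 : K) ≠ 0) (hMal : IsMalcev μ)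
    (hs : IsSlTwo μ E H F) {m : M} :
    m ∈ NMset μ (Submodule.span K {E, H, F}) ↔ jacProj μ E H F m = 0 := by
  refine ⟨fun hm => ?_, fun hm a ha b hb => ?_⟩
  · rw [hs.jacProj_eq hMal, hm E (Submodule.subset_span (by simp)) F
      (Submodule.subset_span (by simp)), map_zero, LinearMap.zero_apply]
  · rw [hMal.mjac_eq, hs.mjac_of_jacProj_eq_zero h2 h3 hMal hm ha hb, sub_self]

/-- `J_M` is the `-3/2`-eigenspace of `m ↦ J(m,E,F)H`. -/
theorem IsSlTwo.mem_JMset_iff (h2 : (2 : K) ≠ 0) (h3 : (3 : K) ≠ 0) (hMal : IsMalcev μ)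
    (hs : IsSlTwo μ E H F)
    (hfaith : ∀ m : M, m ≠ 0 → ∃ a ∈ Submodule.span K {E, H, F}, μ m a ≠ 0) {m : M} :
    m ∈ JMset μ (Submodule.span K {E, H, F}) ↔
      jacProj μ E H F m + (3 / 2 : K) • m = 0 := by
  refine ⟨fun hm => ?_, fun hm a ha b hb => ?_⟩
  · have hE : E ∈ Submodule.span K {E, H, F} := Submodule.subset_span (by simp)
    have hH : H ∈ Submodule.span K {E, H, F} := Submodule.subset_span (by simp)
    have hF : F ∈ Submodule.span K {E, H, F} := Submodule.subset_span (by simp)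
    have hkill : ∀ {a b}, a ∈ Submodule.span K {E, H, F} → b ∈ Submodule.span K {E, H, F} →
        μ (jacProj μ E H F m + (3 / 2 : K) • m) (μ a b) = 0 := fun {a b} ha hb => by
      have h₁ := hs.mjac_jacProj_add h2 hMal m ha hb
      have h₂ := hs.mbr_jacProj h2 hMal m ha hb
      have h₃ := hm a ha b hb
      rw [hMal.mjac_eq] at h₁
      rw [mbr] at h₂ h₃
      simp only [map_add, map_smul, LinearMap.add_apply, LinearMap.smul_apply] at h₁ ⊢
      have h : (3 : K) • (μ (jacProj μ E H F m) (μ a b) + (3 / 2 : K) • μ m (μ a b)) = 0 := by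
        linear_combination (norm := module) h₂ + (3 / 2 : K) • h₃ - h₁
      exact (smul_eq_zero.1 h).resolve_left h3
    by_contra hne
    obtain ⟨a, ha, hma⟩ := hfaith _ hne
    obtain ⟨α, β, γ, rfl⟩ := Submodule.mem_span_triple.1 ha
    have h₁ := hkill hE hH
    have h₂ := hkill (Submodule.smul_mem _ 2 hE) hF
    have h₃ := hkill hH hF
    rw [hs.EH] at h₁
    rw [hs.two_smul_EF h2] at h₂
    rw [hs.HF hMal] at h₃
    exact hma (by rw [map_add, map_add, map_smul, map_smul, map_smul, h₁, h₂, h₃]; simp)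
  · have hm' : m = jacProj μ E H F (-(2 / 3 : K) • m) := by
      rw [map_smul, eq_neg_of_add_eq_zero_left hm]
      match_scalars; field_simp
    rw [hm']
    exact hs.mbr_jacProj h2 hMal _ ha hb

end SlTwo

/-- If `M` is a Malcev algebra in the variety 𝓗 containing
`L = sl₂(F)` (with basis `E, H, F`, `EH = E`, `FH = −F`, `EF = ½H`) and `mL ≠ 0`
for every nonzero `m ∈ M`, then `N_M` is a subalgebra of `M` and `N_M·J_M ⊆ J_M`. -/
theorem stmt0
    (h2 : (2 : K) ≠ 0) (h3 : (3 : K) ≠ 0)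
    (μ : M →ₗ[K] M →ₗ[K] M) (hMal : IsMalcev μ) (hVarH : InVarietyH μ)
    (E H F : M) (hind : LinearIndependent K ![E, H, F])
    (hEH : μ E H = E) (hFH : μ F H = -F) (hEF : μ E F = (2⁻¹ : K) • H)
    (L : Submodule K M) (hL : L = Submodule.span K {E, H, F})
    (hfaith : ∀ m : M, m ≠ 0 → ∃ a ∈ L, μ m a ≠ 0) :
    (∀ x ∈ NMset μ L, ∀ y ∈ NMset μ L, μ x y ∈ NMset μ L) ∧
    (∀ x ∈ NMset μ L, ∀ y ∈ JMset μ L, μ x y ∈ JMset μ L) := by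
  subst hL
  have hs : IsSlTwo μ E H F := ⟨hEH, hFH, hEF⟩
  simp only [hs.mem_NMset_iff h2 h3 hMal, hs.mem_JMset_iff h2 h3 hMal hfaith]
  exact ⟨fun x hx y hy => hs.jacProj_mul_eq_zero h2 h3 hMal hx hy,
    fun x hx y hy => hs.jacProj_mul_add_eq_zero h2 h3 hMal hx hy⟩

end
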